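/- Let L be a Lie subalgebra of Vect_pol(E) that contains the Euler vector field ℰ. Then every ideal I of L is graded, i.e. I = ⊕_{p ≥ −1} (I ∩ Vect_p(E)). -/

import Mathlib

/-!
Euler's identity makes a vector field with homogeneous coefficients of degree `k` an eigenvector of
`ad ℰ` for the eigenvalue `k - 1`, and every polynomial vector field is a finite sum of such fields.
So `ad ℰ` is diagonalizable, and it preserves every ideal of a subalgebra containing `ℰ`. An
invariant subspace of a diagonalizable operator is spanned by the eigenvectors it contains: each
eigencomponent of a vector `x` is a polynomial in the operator applied to `x`.
-/

open MvPolynomial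

/-- The Lie algebra of polynomial vector fields on `E = 𝕜^n`, realized as the
derivations of the polynomial algebra `𝕜[x_1, …, x_n]`. -/
abbrev Vect (𝕜 : Type*) [Field 𝕜] (n : ℕ) : Type _ :=
  Derivation 𝕜 (MvPolynomial (Fin n) 𝕜) (MvPolynomial (Fin n) 𝕜)

variable (𝕜 : Type*) [Field 𝕜] (n : ℕ)

/-- The Euler vector field `ℰ = Σ x^j ∂_j`. -/
noncomputable def euler : Vect 𝕜 n :=
  MvPolynomial.mkDerivation 𝕜 fun i => MvPolynomial.X i

/-- `Vect_p(E)`: the eigenspace of `ad(ℰ)` for the eigenvalue `p`, i.e. the vector fields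
with homogeneous coefficients of degree `p+1`. -/
noncomputable def VectP (p : ℤ) : Submodule 𝕜 (Vect 𝕜 n) :=
  Module.End.eigenspace (LieAlgebra.ad 𝕜 (Vect 𝕜 n) (euler 𝕜 n)) ((p : 𝕜))

/-- A Lie subalgebra `L` of `Vect_pol(E)` is graded if `L = ⊕_{p ≥ -1} (L ∩ Vect_p(E))`. -/
def IsGradedSubalg (L : LieSubalgebra 𝕜 (Vect 𝕜 n)) : Prop :=
  L.toSubmodule = ⨆ p ≥ (-1 : ℤ), (L.toSubmodule ⊓ VectP 𝕜 n p)

/-- A Lie subalgebra `L` of `Vect_pol(E)` is maximal if the only subalgebras containing it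
are `L` itself and `Vect_pol(E)`. -/
def IsMaxSubalg (L : LieSubalgebra 𝕜 (Vect 𝕜 n)) : Prop :=
  ∀ L' : LieSubalgebra 𝕜 (Vect 𝕜 n), L ≤ L' → L' = L ∨ L' = ⊤

section Eigenspaces

variable {K V : Type*} [Field K] [AddCommGroup V] [Module K V]
  {f : Module.End K V} {p : Submodule K V}

theorem mem_of_sum_mem_of_apply_eq_smul {ι : Type*} (hp : ∀ x ∈ p, f x ∈ p) {s : Finset ι}
    {c : ι → K} (hc : Set.InjOn c s) {v : ι → V} (hv : ∀ i, f (v i) = c i • v i)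
    (hsum : ∑ i ∈ s, v i ∈ p) {j : ι} (hj : j ∈ s) : v j ∈ p := by
  classical
  -- The Lagrange basis polynomial at `c j` evaluates at `f` to the projection onto the `j`-th term.
  have hproj : Polynomial.aeval f (Lagrange.basis s c j) (∑ i ∈ s, v i) = v j := by
    simp only [map_sum, Module.End.aeval_apply_of_mem_apply_eq_smul (hv _)]
    rw [Finset.sum_eq_single_of_mem j hj, Lagrange.eval_basis_self hc hj, one_smul]
    intro i hi hij
    rw [Lagrange.eval_basis_of_ne hij.symm hi, zero_smul]
  rw [← hproj]
  exact Polynomial.aeval_apply_smul_mem_of_le_comap hsum _ f hp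

theorem inf_biSup_eigenspace (hp : ∀ x ∈ p, f x ∈ p) (S : Set K) :
    p ⊓ ⨆ μ ∈ S, f.eigenspace μ = ⨆ μ ∈ S, p ⊓ f.eigenspace μ := by
  refine le_antisymm ?_ (le_inf (iSup₂_le fun _ _ => inf_le_left)
    (iSup₂_mono fun _ _ => inf_le_right))
  rintro x ⟨hxp, hx⟩
  rw [iSup_subtype'] at hx ⊢
  obtain ⟨v, hv, rfl⟩ := (Submodule.mem_iSup_iff_exists_finsupp _ _).mp hx
  refine Submodule.sum_mem _ fun μ hμ => Submodule.mem_iSup_of_mem μ ⟨?_, hv μ⟩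
  exact mem_of_sum_mem_of_apply_eq_smul hp Subtype.val_injective.injOn
    (fun ν => Module.End.mem_eigenspace_iff.mp (hv ν)) hxp hμ

end Eigenspaces

section Derivations

theorem derivation_sum_apply {R A M ι : Type*} [CommSemiring R] [CommSemiring A]
    [AddCommMonoid M] [Algebra R A] [Module A M] [Module R M] (s : Finset ι)
    (D : ι → Derivation R A M) (a : A) : (∑ i ∈ s, D i) a = ∑ i ∈ s, D i a := by
  simpa only [Derivation.coeFnAddMonoidHom_apply, Finset.sum_apply] using
    congrFun (map_sum Derivation.coeFnAddMonoidHom D s) a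

theorem derivation_eq_sum_smul_pderiv {R σ : Type*} [CommSemiring R] [Fintype σ]
    (D : Derivation R (MvPolynomial σ R) (MvPolynomial σ R)) :
    D = ∑ i, D (X i) • pderiv i := by
  classical
  refine derivation_ext fun j => ?_
  simp [derivation_sum_apply, pderiv_X, Pi.single_apply]

end Derivations

section PolynomialVectorFields

variable {𝕜 : Type*} [Field 𝕜] {n : ℕ}

theorem euler_X (i : Fin n) : euler 𝕜 n (X i) = X i :=
  mkDerivation_X _ _ i

theorem euler_apply_of_isHomogeneous {k : ℕ} {φ : MvPolynomial (Fin n) 𝕜}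
    (hφ : φ.IsHomogeneous k) : euler 𝕜 n φ = (k : 𝕜) • φ := by
  rw [derivation_eq_sum_smul_pderiv (euler 𝕜 n), derivation_sum_apply, Nat.cast_smul_eq_nsmul,
    ← hφ.sum_X_mul_pderiv]
  simp only [euler_X, Derivation.smul_apply, smul_eq_mul]

theorem mem_VectP_of_isHomogeneous {k : ℕ} {D : Vect 𝕜 n}
    (hD : ∀ i, (D (X i)).IsHomogeneous k) : D ∈ VectP 𝕜 n (k - 1) := by
  refine Module.End.mem_eigenspace_iff.mpr (derivation_ext fun i => ?_)
  rw [LieAlgebra.ad_apply, Derivation.commutator_apply, euler_X,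
    euler_apply_of_isHomogeneous (hD i), Derivation.smul_apply]
  push_cast
  rw [sub_smul, one_smul]

theorem smul_pderiv_mem_VectP {k : ℕ} {φ : MvPolynomial (Fin n) 𝕜} (hφ : φ.IsHomogeneous k)
    (i : Fin n) : (φ • pderiv i : Vect 𝕜 n) ∈ VectP 𝕜 n (k - 1) := by
  refine mem_VectP_of_isHomogeneous fun j => ?_
  rw [Derivation.smul_apply, smul_eq_mul]
  rcases eq_or_ne j i with rfl | hji
  · rwa [pderiv_X_self, mul_one]
  · rw [pderiv_X_of_ne hji, mul_zero]
    exact isHomogeneous_zero _ _ _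

theorem biSup_VectP_eq_top : ⨆ p ≥ (-1 : ℤ), VectP 𝕜 n p = ⊤ := by
  refine eq_top_iff.mpr fun D _ => ?_
  rw [derivation_eq_sum_smul_pderiv D]
  refine Submodule.sum_mem _ fun i _ => ?_
  rw [← sum_homogeneousComponent (D (X i)), Finset.sum_smul]
  refine Submodule.sum_mem _ fun k _ => ?_
  have hk : (k : ℤ) - 1 ≥ -1 := by lia
  exact Submodule.mem_iSup_of_mem _ <| Submodule.mem_iSup_of_mem hk <|
    smul_pderiv_mem_VectP (homogeneousComponent_isHomogeneous k _) i

-- In characteristic `ℓ > 0` the spaces `VectP 𝕜 n p` are `ℓ`-periodic in `p`: there the right-hand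
-- side is the decomposition into eigenspaces of `ad ℰ`, which is coarser than the one by degree.
theorem statement2_general {I : Submodule 𝕜 (Vect 𝕜 n)} (hI : ∀ D ∈ I, ⁅euler 𝕜 n, D⁆ ∈ I) :
    I = ⨆ p ≥ (-1 : ℤ), (I ⊓ VectP 𝕜 n p) := by
  have hinf := inf_biSup_eigenspace (f := LieAlgebra.ad 𝕜 (Vect 𝕜 n) (euler 𝕜 n)) hI
    ((fun p : ℤ => (p : 𝕜)) '' Set.Ici (-1))
  rw [iSup_image, iSup_image] at hinf
  calc I = I ⊓ ⨆ p ≥ (-1 : ℤ), VectP 𝕜 n p := by rw [biSup_VectP_eq_top, inf_top_eq]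
    _ = ⨆ p ≥ (-1 : ℤ), (I ⊓ VectP 𝕜 n p) := hinf

end PolynomialVectorFields

/-- Let `L` be a Lie subalgebra of `Vect_pol(E)` containing the Euler vector field, and let
`I` be an ideal of `L` (a subspace of `L` with `⁅L, I⁆ ⊆ I`).  Then `I` is graded:
`I = ⊕_{p ≥ -1} (I ∩ Vect_p(E))`. -/
theorem statement2 (𝕜 : Type) [RCLike 𝕜] (n : ℕ) (hn : 0 < n)
    (L : LieSubalgebra 𝕜 (Vect 𝕜 n)) (heuler : euler 𝕜 n ∈ L)
    (I : Submodule 𝕜 (Vect 𝕜 n)) (hIL : I ≤ L.toSubmodule)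
    (hideal : ∀ x ∈ L, ∀ y ∈ I, ⁅x, y⁆ ∈ I) :
    I = ⨆ p ≥ (-1 : ℤ), (I ⊓ VectP 𝕜 n p) :=
  statement2_general (hideal _ heuler)
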